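/- For every i ∈ Σ_{n+1}, the system of string inequalities indexed by the rigorous paths GP(i) is non-redundant for the string cone C_i; equivalently, the number of facets of C_i equals |GP(i)|. -/

import Mathlib

open scoped Classical

noncomputable section

namespace StringPolytope

/-! ### Words, reduced words, two-moves -/

/-- the simple transposition `s_a = (a, a+1)` acting on `ℕ` (wires are `1, …, n+1`). -/
def sTrans (a : ℕ) : Equiv.Perm ℕ := Equiv.swap a (a + 1)

/-- product `s_{i₁} ⋯ s_{i_N}` of the simple transpositions of a word. -/
def wordProd (w : List ℕ) : Equiv.Perm ℕ := (w.map sTrans).prod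

/-- the longest element `w₀` of the symmetric group on `{1, …, n+1}`,
sending `k ↦ n + 2 - k` there and fixing everything else. -/
def longestPerm (n : ℕ) : Equiv.Perm ℕ :=
  Function.Involutive.toPerm
    (fun k => if 1 ≤ k ∧ k ≤ n + 1 then n + 2 - k else k)
    (by intro k; dsimp only; split_ifs <;> omega)

/-- `w ∈ Σ_{n+1}`: a reduced word of the longest element of `S_{n+1}`,
i.e. a word over `[n] = {1,…,n}` of length `N = n(n+1)/2` whose product is `w₀`. -/
def IsReduced (n : ℕ) (w : List ℕ) : Prop :=
  w.length = n * (n + 1) / 2 ∧ (∀ a ∈ w, 1 ≤ a ∧ a ≤ n) ∧ wordProd w = longestPerm n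

/-- a single 2-move: exchange two adjacent letters `(a, b)` with `|a - b| > 1`. -/
def TwoMoveStep (w w' : List ℕ) : Prop :=
  ∃ u v a b, (a + 1 < b ∨ b + 1 < a) ∧ w = u ++ a :: b :: v ∧ w' = u ++ b :: a :: v

/-- 2-move equivalence of words. -/
def TwoMoveEquiv : List ℕ → List ℕ → Prop := Relation.ReflTransGen TwoMoveStep

/-- `A_n = (1, 2, …, n)`. -/
def ascWord (n : ℕ) : List ℕ := (List.range n).map (· + 1)

/-- `D_n = (n, n-1, …, 1)`. -/
def descWord (n : ℕ) : List ℕ := (ascWord n).reverse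

/-! ### The wiring diagram -/

/-- the letter `i_j` of `w` (1-based index `j`); the node `t_j` lies in column `i_j`. -/
def letterAt (w : List ℕ) (j : ℕ) : ℕ := w.getD (j - 1) 0

/-- `1 ≤ j ≤ N`: `t_j` is an actual node of the diagram. -/
def ValidNode (w : List ℕ) (j : ℕ) : Prop := 1 ≤ j ∧ j ≤ w.length

/-- the column-to-wire assignment just above node `t_j`
(at the top of the diagram, wire `k` is in column `k`). -/
def stateAbove (w : List ℕ) (j : ℕ) : Equiv.Perm ℕ := wordProd (w.take (j - 1))

/-- the column-to-wire assignment just below node `t_j`. -/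
def stateBelow (w : List ℕ) (j : ℕ) : Equiv.Perm ℕ := wordProd (w.take j)

/-- one of the two wires crossing at node `t_j` (the one leaving upward-left). -/
def wireX (w : List ℕ) (j : ℕ) : ℕ := stateAbove w j (letterAt w j)

/-- the other wire crossing at node `t_j` (the one leaving upward-right). -/
def wireY (w : List ℕ) (j : ℕ) : ℕ := stateAbove w j (letterAt w j + 1)

/-- the node `t_j` lies on the wire `ℓ_r`. -/
def NodeOnWire (w : List ℕ) (j r : ℕ) : Prop := wireX w j = r ∨ wireY w j = r

/-- given one wire `r` at node `t_j`, the other wire crossing there. -/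
def otherWire (w : List ℕ) (j r : ℕ) : ℕ := if wireX w j = r then wireY w j else wireX w j

/-- the column of wire `ℓ_r` at the height of node `t_j`. -/
def wireCol (w : List ℕ) (j r : ℕ) : ℕ := (stateBelow w j).symm r

/-- node `t_j` lies strictly below the wire `ℓ_{n+1}`
(which runs from the bottom-left corner to the top-right corner). -/
def BelowWireLast (n : ℕ) (w : List ℕ) (j : ℕ) : Prop :=
  wireCol w j (n + 1) < letterAt w j

/-- node `t_j` lies strictly above the wire `ℓ_{n+1}`. -/
def AboveWireLast (n : ℕ) (w : List ℕ) (j : ℕ) : Prop :=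
  letterAt w j + 1 < wireCol w j (n + 1)

/-- node `t_j` lies strictly below the wire `ℓ_1`
(which runs from the bottom-right corner to the top-left corner). -/
def BelowWireOne (w : List ℕ) (j : ℕ) : Prop :=
  letterAt w j + 1 < wireCol w j 1

/-- node `t_j` lies strictly above the wire `ℓ_1`. -/
def AboveWireOne (w : List ℕ) (j : ℕ) : Prop :=
  wireCol w j 1 < letterAt w j

/-! ### Rigorous (Gleizer–Postnikov) paths

A path in `G(i, k)` is encoded by `k` together with the list of its switching
nodes, in order of travel.  Wires `ℓ_1, …, ℓ_k` are oriented upward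
(decreasing node index) and the remaining wires downward. -/

/-- the (1-based indices of the) nodes lying on wire `ℓ_r`, in order of increasing index. -/
def nodesOn (w : List ℕ) (r : ℕ) : List ℕ :=
  ((List.range w.length).map (· + 1)).filter (fun j => decide (NodeOnWire w j r))

/-- nodes on wire `ℓ_r` strictly between the nodes `t_a` and `t_b`. -/
def segList (w : List ℕ) (r a b : ℕ) : List ℕ :=
  (nodesOn w r).filter (fun j => decide (min a b < j ∧ j < max a b))

/-- nodes on wire `ℓ_r` strictly below the node `t_a`. -/
def tailList (w : List ℕ) (r a : ℕ) : List ℕ :=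
  (nodesOn w r).filter (fun j => decide (a < j))

/-- a forbidden fragment of `G(i, k)`: the path passes straight through node `t_j`
travelling along the wire `ℓ_r`, where the other wire `ℓ_b` crossing there has the same
orientation as `ℓ_r` and (`r < b` if both upward, `r > b` if both downward). -/
def Forbidden (w : List ℕ) (k j r : ℕ) : Prop :=
  (r ≤ k ∧ otherWire w j r ≤ k ∧ r < otherWire w j r) ∨
  (k < r ∧ k < otherWire w j r ∧ otherWire w j r < r)

/-- travelling in `G(i,k)`: currently on wire `ℓ_r` at node `t_a` (just switched there),
with future switching nodes `ms`; the travel is legal and ends at `L_{k+1}`. -/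
def TravelOK (w : List ℕ) (k : ℕ) : ℕ → ℕ → List ℕ → Prop
  | r, a, [] => r = k + 1 ∧ ∀ j ∈ tailList w r a, ¬ Forbidden w k j r
  | r, a, m :: ms =>
      ValidNode w m ∧ NodeOnWire w m r ∧
      (if r ≤ k then m < a else a < m) ∧
      (∀ j ∈ segList w r a m, ¬ Forbidden w k j r) ∧
      TravelOK w k (otherWire w m r) m ms

/-- all nodes visited after the switch at node `t_a` onto wire `ℓ_r`. -/
def visitTail (w : List ℕ) : ℕ → ℕ → List ℕ → List ℕ
  | r, a, [] => tailList w r a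
  | r, a, m :: ms => segList w r a m ++ m :: visitTail w (otherWire w m r) m ms

/-- the list of all nodes visited by the path (switching nodes and straight passes). -/
def visitList (w : List ℕ) (k : ℕ) : List ℕ → List ℕ
  | [] => []
  | m :: ms => tailList w k m ++ m :: visitTail w (otherWire w m k) m ms

/-- `(k, ms)` encodes a rigorous (Gleizer–Postnikov) path in `G(i, k)`:
it starts at `L_k` going up the wire `ℓ_k`, switches wires exactly at the nodes
listed in `ms`, respects the orientation, ends at `L_{k+1}`, contains no forbidden
fragment and passes through each node at most once. -/
def IsGPPath (n : ℕ) (w : List ℕ) (k : ℕ) (ms : List ℕ) : Prop :=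
  1 ≤ k ∧ k ≤ n ∧
  (match ms with
   | [] => False
   | m :: rest =>
       ValidNode w m ∧ NodeOnWire w m k ∧
       (∀ j ∈ tailList w k m, ¬ Forbidden w k j k) ∧
       TravelOK w k (otherWire w m k) m rest) ∧
  (visitList w k ms).Nodup

/-- the set `GP(i)` of all rigorous paths of `G(i)`. -/
def GP (n : ℕ) (w : List ℕ) : Set (ℕ × List ℕ) := {p | IsGPPath n w p.1 p.2}

/-- `|GP(i)|`, the number of rigorous paths. -/
def numGP (n : ℕ) (w : List ℕ) : ℕ := (GP n w).ncard

/-- the successive switches of a path: `(node, from-wire, to-wire)`. -/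
def pathSwitches (w : List ℕ) : ℕ → List ℕ → List (ℕ × ℕ × ℕ)
  | _, [] => []
  | r, m :: ms => (m, r, otherWire w m r) :: pathSwitches w (otherWire w m r) ms

/-- the wire-expression of a path: the successive wires travelled. -/
def wireSeq (w : List ℕ) : ℕ → List ℕ → List ℕ
  | r, [] => [r]
  | r, m :: ms => r :: wireSeq w (otherWire w m r) ms

/-- the peaks of a path: switching nodes where the path switches from an
upward wire to a downward wire. -/
def peaks (w : List ℕ) (k : ℕ) (ms : List ℕ) : List ℕ :=
  ((pathSwitches w k ms).filter (fun e => decide (e.2.1 ≤ k ∧ k < e.2.2))).map (·.1)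

/-! ### String cone, `λ`-cone, string polytope -/

/-- `N = n(n+1)/2`, the number of nodes. -/
abbrev Dim (n : ℕ) : ℕ := n * (n + 1) / 2

/-- the coefficient `a_j` of `t_j` in the string inequality of the path `(k, ms)`:
`+1` if the path switches at `t_j` from `ℓ_r` to `ℓ_s` with `r < s`,
`-1` if it switches with `r > s`, and `0` otherwise. -/
def coeff (w : List ℕ) (k : ℕ) (ms : List ℕ) (j : ℕ) : ℝ :=
  ((pathSwitches w k ms).map (fun e =>
    if e.1 = j then (if e.2.1 < e.2.2 then (1 : ℝ) else -1) else 0)).sum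

/-- the (primitive inward normal) coefficient vector of the string inequality of a path. -/
def normalVec (n : ℕ) (w : List ℕ) (p : ℕ × List ℕ) : Fin (Dim n) → ℝ :=
  fun j => coeff w p.1 p.2 ((j : ℕ) + 1)

/-- the left-hand side `∑ a_j t_j` of the string inequality of the path `p`. -/
def stringIneq (n : ℕ) (w : List ℕ) (p : ℕ × List ℕ) (t : Fin (Dim n) → ℝ) : ℝ :=
  ∑ j : Fin (Dim n), normalVec n w p j * t j

/-- the string cone `C_i ⊆ ℝ^N`. -/
def stringCone (n : ℕ) (w : List ℕ) : Set (Fin (Dim n) → ℝ) :=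
  {t | ∀ p ∈ GP n w, 0 ≤ stringIneq n w p t}

/-- the polyhedron cut out by all string inequalities except the one of `p₀`. -/
def stringConeExcept (n : ℕ) (w : List ℕ) (p₀ : ℕ × List ℕ) : Set (Fin (Dim n) → ℝ) :=
  {t | ∀ p ∈ GP n w, p ≠ p₀ → 0 ≤ stringIneq n w p t}

/-- the coefficient `a_k` in the `λ`-inequality of node `t_j`:
`1` if `t_k` is one column left or right of `t_j`, `-2` if in the same column. -/
def lamCoeff (w : List ℕ) (j k : ℕ) : ℝ :=
  if letterAt w k = letterAt w j then -2
  else if letterAt w k = letterAt w j + 1 ∨ letterAt w k + 1 = letterAt w j then 1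
  else 0

/-- the `λ`-inequality of node `t_{j+1}`:
`t_j ≤ λ_{i_j} + ∑_{k > j} a_k t_k`. -/
def LamIneq (n : ℕ) (w : List ℕ) (lam : ℕ → ℤ) (j : Fin (Dim n)) (t : Fin (Dim n) → ℝ) : Prop :=
  t j ≤ (lam (letterAt w ((j : ℕ) + 1)) : ℝ) +
    ∑ k : Fin (Dim n),
      (if (j : ℕ) < (k : ℕ) then lamCoeff w ((j : ℕ) + 1) ((k : ℕ) + 1) else 0) * t k

/-- the `λ`-cone `C_i^λ ⊆ ℝ^N`. -/
def lamCone (n : ℕ) (w : List ℕ) (lam : ℕ → ℤ) : Set (Fin (Dim n) → ℝ) :=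
  {t | ∀ j, LamIneq n w lam j t}

/-- the polyhedron cut out by all `λ`-inequalities except the one of `j₀`. -/
def lamConeExcept (n : ℕ) (w : List ℕ) (lam : ℕ → ℤ) (j₀ : Fin (Dim n)) :
    Set (Fin (Dim n) → ℝ) :=
  {t | ∀ j, j ≠ j₀ → LamIneq n w lam j t}

/-- the string polytope `Δ_i(λ) = C_i ∩ C_i^λ`. -/
def stringPolytope (n : ℕ) (w : List ℕ) (lam : ℕ → ℤ) : Set (Fin (Dim n) → ℝ) :=
  stringCone n w ∩ lamCone n w lam

/-- `λ = λ_1 ϖ_1 + ⋯ + λ_n ϖ_n` is a dominant integral weight: all `λ_j ≥ 0`. -/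
def Dominant (n : ℕ) (lam : ℕ → ℤ) : Prop := ∀ j, 1 ≤ j → j ≤ n → 0 ≤ lam j

/-- `λ` is a regular dominant integral weight: all `λ_j > 0`. -/
def RegularDominant (n : ℕ) (lam : ℕ → ℤ) : Prop := ∀ j, 1 ≤ j → j ≤ n → 0 < lam j

/-! ### Unimodular equivalence, Gelfand–Cetlin polytope, facets -/

/-- `P` and `Q` are unimodularly equivalent: `Q = M(P) + v` with `M ∈ GL(m, ℤ)`, `v ∈ ℤ^m`. -/
def UnimodEquiv {m : ℕ} (P Q : Set (Fin m → ℝ)) : Prop :=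
  ∃ (M : Matrix (Fin m) (Fin m) ℤ) (v : Fin m → ℤ), IsUnit M.det ∧
    Q = (fun x i => (∑ j, (M i j : ℝ) * x j) + (v i : ℝ)) '' P

/-- the entry `x_{k,j}` (`1 ≤ j ≤ k ≤ n+1`) of a Gelfand–Cetlin pattern, where the
top row is `x_{n+1,j} = λ_j + ⋯ + λ_n` and `x_{n+1,n+1} = 0`; the pair `(k, j)` is
encoded as the coordinate `k(k-1)/2 + (j-1)` of `ℝ^N`. -/
def gcX (n : ℕ) (lam : ℕ → ℤ) (x : Fin (Dim n) → ℝ) (k j : ℕ) : ℝ :=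
  if k = n + 1 then (if j ≤ n then ∑ t ∈ Finset.Icc j n, (lam t : ℝ) else 0)
  else if h : k * (k - 1) / 2 + (j - 1) < Dim n then x ⟨k * (k - 1) / 2 + (j - 1), h⟩ else 0

/-- the Gelfand–Cetlin polytope `GC(λ) ⊆ ℝ^N`. -/
def GCPolytope (n : ℕ) (lam : ℕ → ℤ) : Set (Fin (Dim n) → ℝ) :=
  {x | ∀ k j, 1 ≤ k → k ≤ n → 1 ≤ j → j ≤ k →
      gcX n lam x k j ≤ gcX n lam x (k + 1) j ∧
      gcX n lam x (k + 1) (j + 1) ≤ gcX n lam x k j}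

/-- a face of a convex set: a convex extreme subset. -/
def IsFaceSet {m : ℕ} (S F : Set (Fin m → ℝ)) : Prop := IsExtreme ℝ S F ∧ Convex ℝ F

/-- a facet: a maximal proper face. -/
def IsFacet {m : ℕ} (S F : Set (Fin m → ℝ)) : Prop :=
  IsFaceSet S F ∧ F ≠ S ∧ ∀ G, IsFaceSet S G → G ≠ S → F ⊆ G → F = G

/-- the number of facets. -/
def numFacets {m : ℕ} (S : Set (Fin m → ℝ)) : ℕ := {F | IsFacet S F}.ncard

/-- combinatorial equivalence: an inclusion-preserving bijection between face lattices. -/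
def CombEquiv {m : ℕ} (S T : Set (Fin m → ℝ)) : Prop :=
  ∃ e : {F // IsFaceSet S F} ≃ {F // IsFaceSet T F},
    ∀ F G : {F // IsFaceSet S F}, F.1 ⊆ G.1 ↔ (e F).1 ⊆ (e G).1

/-! ### Indices, contractions and extensions -/

/-- the `D`-index `ind_D(i) = |i_D^+|` for a decomposition `i ∼ i_D^- D_n i_D^+`
(independent of the decomposition). -/
def indD (n : ℕ) (w : List ℕ) : ℕ :=
  sInf {s | ∃ u v : List ℕ, v.length = s ∧ TwoMoveEquiv w (u ++ descWord n ++ v)}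

/-- the `A`-index `ind_A(i) = |i_A^+|` for a decomposition `i ∼ i_A^- A_n i_A^+`. -/
def indA (n : ℕ) (w : List ℕ) : ℕ :=
  sInf {s | ∃ u v : List ℕ, v.length = s ∧ TwoMoveEquiv w (u ++ ascWord n ++ v)}

/-- `w'` is a `D`-contraction `C_D(w) = i_D^- (i_D^+ - 1)` of `w ∈ Σ_{n+1}`. -/
def IsContractionD (n : ℕ) (w w' : List ℕ) : Prop :=
  ∃ u v : List ℕ, TwoMoveEquiv w (u ++ descWord n ++ v) ∧ w' = u ++ v.map (· - 1)

/-- `w'` is an `A`-contraction `C_A(w) = (i_A^- - 1) i_A^+` of `w ∈ Σ_{n+1}`. -/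
def IsContractionA (n : ℕ) (w w' : List ℕ) : Prop :=
  ∃ u v : List ℕ, TwoMoveEquiv w (u ++ ascWord n ++ v) ∧ w' = u.map (· - 1) ++ v

/-- the `D`-extension `E_D(s) : Σ_{n+1} → Σ_{n+2}`,
`i = i^-(s) i^+(s) ↦ i^-(s) D_{n+1} (i^+(s) + 1)` where `|i^+(s)| = s`. -/
def extD (n : ℕ) (s : ℕ) (w : List ℕ) : List ℕ :=
  w.take (w.length - s) ++ descWord (n + 1) ++ (w.drop (w.length - s)).map (· + 1)

/-- the `A`-extension `E_A(s) : Σ_{n+1} → Σ_{n+2}`,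
`i = i^-(s) i^+(s) ↦ (i^-(s) + 1) A_{n+1} i^+(s)`. -/
def extA (n : ℕ) (s : ℕ) (w : List ℕ) : List ℕ :=
  (w.take (w.length - s)).map (· + 1) ++ ascWord (n + 1) ++ w.drop (w.length - s)

/-- there exists `(σ_1, …, σ_n) ∈ {A, D}^n` (here `true = D`, `false = A`) such that
`ind_{σ_k}(C_{σ_{k+1}} ∘ ⋯ ∘ C_{σ_n}(i)) = 0` for all `k = n, …, 1`. -/
def SimplicialWord (n : ℕ) (w : List ℕ) : Prop :=
  ∃ (σ : ℕ → Bool) (c : ℕ → List ℕ), c n = w ∧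
    ∀ k, 1 ≤ k → k ≤ n →
      (if σ k then IsContractionD k (c k) (c (k - 1)) ∧ indD k (c k) = 0
       else IsContractionA k (c k) (c (k - 1)) ∧ indA k (c k) = 0)


/-- the `D`-coindex `coind_D(i) = |i_D^-|`. -/
def coindD (n : ℕ) (w : List ℕ) : ℕ :=
  sInf {s | ∃ u v : List ℕ, u.length = s ∧ TwoMoveEquiv w (u ++ descWord n ++ v)}

/-- the `A`-coindex `coind_A(i) = |i_A^-|`. -/
def coindA (n : ℕ) (w : List ℕ) : ℕ :=
  sInf {s | ∃ u v : List ℕ, u.length = s ∧ TwoMoveEquiv w (u ++ ascWord n ++ v)}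

/-- the `a`-th (0-based) coordinate of a point of `ℝ^N`. -/
def entry (n : ℕ) (t : Fin (Dim n) → ℝ) (a : ℕ) : ℝ :=
  if h : a < Dim n then t ⟨a, h⟩ else 0

/-- the product of cones
`t_1 ≥ 0`, `t_2 ≥ t_3 ≥ 0`, …, `t_{N-n+1} ≥ ⋯ ≥ t_N ≥ 0` (in `ℝ^N`, 1-based:
for `k = 1, …, n` the chain `t_{k(k-1)/2+1} ≥ ⋯ ≥ t_{k(k-1)/2+k} ≥ 0`). -/
def chainCone (n : ℕ) : Set (Fin (Dim n) → ℝ) :=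
  {t | ∀ k j, 1 ≤ k → k ≤ n → 1 ≤ j → j ≤ k →
    (if j = k then 0 else entry n t (k * (k - 1) / 2 + j)) ≤
      entry n t (k * (k - 1) / 2 + (j - 1))}

/-! ### Polyhedral part -/

section Poly

variable {V : Type*} [AddCommGroup V] [Module ℝ V] {ι : Type*}

theorem face_eq_of_pos {P : Set ι} (hP : P.Finite) (φ : ι → V →ₗ[ℝ] ℝ) (F : Set V)
    (hF : IsExtreme ℝ {t | ∀ p ∈ P, 0 ≤ φ p t} F) (y : V) (hy : y ∈ F)
    (hpos : ∀ p ∈ P, 0 < φ p y) : F = {t | ∀ p ∈ P, 0 ≤ φ p t} := by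
  apply Set.Subset.antisymm hF.1
  intro x hx
  obtain ⟨K, hK⟩ : ∃ K : ℝ, ∀ p ∈ P, φ p x / φ p y ≤ K := by
    obtain ⟨K, hK⟩ := (hP.image (fun p => φ p x / φ p y)).bddAbove
    exact ⟨K, fun p hp => hK ⟨p, hp, rfl⟩⟩
  set L : ℝ := max K 0 + 1 with hL
  have hLpos : 0 < L := by positivity
  have hLK : K ≤ L := by linarith [le_max_left K 0]
  have hb : ∀ p ∈ P, φ p x ≤ L * φ p y := by
    intro p hp
    have h1 := (hK p hp).trans hLK
    rwa [div_le_iff₀ (hpos p hp)] at h1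
  -- z = y + (1/L)(y - x)
  set z : V := y + (1 / L) • (y - x) with hz
  have hzC : z ∈ {t | ∀ p ∈ P, 0 ≤ φ p t} := by
    intro p hp
    have h1 := hb p hp
    have h2 := hpos p hp
    have h3 : (1 / L) * φ p x ≤ φ p y := by
      rw [one_div, inv_mul_le_iff₀ hLpos]; exact h1
    have h4 : 0 ≤ (1 / L) * φ p y := by positivity
    simp only [hz, map_add, map_smul, map_sub, smul_eq_mul]
    nlinarith
  have hseg : y ∈ openSegment ℝ x z := by
    refine ⟨1 / (L + 1), L / (L + 1), by positivity, by positivity, by field_simp; ring, ?_⟩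
    rw [hz]
    have e1 : L / (L + 1) * (1 / L) = 1 / (L + 1) := by field_simp
    have e2 : L / (L + 1) = 1 - 1 / (L + 1) := by field_simp; ring
    rw [smul_add, smul_smul, e1, e2]
    module
  exact hF.2 hx hzC hy hseg

theorem facets_count {m : ℕ} {P : Set ι} (hP : P.Finite) (hne : P.Nonempty)
    (φ : ι → (Fin m → ℝ) →ₗ[ℝ] ℝ) (t0 : Fin m → ℝ) (ht0 : ∀ p ∈ P, φ p t0 = 1)
    (u : ι → Fin m → ℝ) (hu : ∀ p ∈ P, φ p (u p) < 0)
    (hu' : ∀ p ∈ P, ∀ q ∈ P, q ≠ p → 0 ≤ φ q (u p)) :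
    numFacets {t | ∀ p ∈ P, 0 ≤ φ p t} = P.ncard := by
  set C : Set (Fin m → ℝ) := {t | ∀ p ∈ P, 0 ≤ φ p t} with hC
  have hCconv : Convex ℝ C := by
    intro x hx y hy a b ha hb _ p hp
    have h1 := hx p hp
    have h2 := hy p hp
    simp only [map_add, map_smul, smul_eq_mul]
    positivity
  let Fc : ι → Set (Fin m → ℝ) := fun p => {t | t ∈ C ∧ φ p t = 0}
  have hface : ∀ p ∈ P, IsFaceSet C (Fc p) := by
    intro p hp
    constructor
    · refine ⟨fun x hx => hx.1, ?_⟩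
      rintro x hx y hy z hz ⟨a, b, ha, hb, _, rfl⟩
      refine ⟨hx, ?_⟩
      have h1 := hx p hp
      have h2 := hy p hp
      have h3 := hz.2
      simp only [map_add, map_smul, smul_eq_mul] at h3
      have h4 : a * φ p x = 0 := by nlinarith [mul_nonneg ha.le h1, mul_nonneg hb.le h2]
      rcases mul_eq_zero.1 h4 with h | h
      · exact absurd h ha.ne'
      · exact h
    · intro x hx y hy a b ha hb hab
      refine ⟨hCconv hx.1 hy.1 ha hb hab, ?_⟩
      simp [hx.2, hy.2]
  have ht0C : t0 ∈ C := fun p hp => by rw [ht0 p hp]; norm_num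
  have hneC : ∀ p ∈ P, Fc p ≠ C := by
    intro p hp h
    have : t0 ∈ Fc p := h ▸ ht0C
    have := this.2
    rw [ht0 p hp] at this
    norm_num at this
  let z : ι → Fin m → ℝ := fun p => u p + (-(φ p (u p))) • t0
  have hz0 : ∀ p ∈ P, φ p (z p) = 0 := by
    intro p hp; simp [z, ht0 p hp]
  have hzpos : ∀ p ∈ P, ∀ q ∈ P, q ≠ p → 0 < φ q (z p) := by
    intro p hp q hq hqp
    have h1 := hu p hp
    have h2 := hu' p hp q hq hqp
    simp only [z, map_add, map_smul, smul_eq_mul, ht0 q hq]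
    linarith
  have hzF : ∀ p ∈ P, z p ∈ Fc p := by
    intro p hp
    refine ⟨fun q hq => ?_, hz0 p hp⟩
    by_cases h : q = p
    · subst h; exact (hz0 q hq).ge
    · exact (hzpos p hp q hq h).le
  have hfacet : ∀ p ∈ P, IsFacet C (Fc p) := by
    intro p hp
    refine ⟨hface p hp, hneC p hp, ?_⟩
    intro G hG hGC hFG
    apply Set.Subset.antisymm hFG
    intro y hy
    have hyC := hG.1.1 hy
    refine ⟨hyC, ?_⟩
    by_contra hne
    have hpos : 0 < φ p y := lt_of_le_of_ne (hyC p hp) (Ne.symm hne)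
    apply hGC
    have hw : (1 / 2 : ℝ) • y + (1 / 2 : ℝ) • z p ∈ G :=
      hG.2 hy (hFG (hzF p hp)) (by norm_num) (by norm_num) (by norm_num)
    refine face_eq_of_pos hP φ G hG.1 _ hw ?_
    intro q hq
    simp only [map_add, map_smul, smul_eq_mul]
    by_cases h : q = p
    · subst h; rw [hz0 q hq]; linarith
    · have := hzpos p hp q hq h
      have := hyC q hq
      linarith
  have himg : {F | IsFacet C F} = Fc '' P := by
    ext F
    constructor
    · intro hF
      by_cases hsub : ∃ p ∈ P, F ⊆ Fc p
      · obtain ⟨p, hp, hs⟩ := hsub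
        exact ⟨p, hp, (hF.2.2 _ (hface p hp) (hneC p hp) hs).symm⟩
      · exfalso
        push Not at hsub
        have hy : ∀ p, ∃ y, p ∈ P → y ∈ F ∧ 0 < φ p y := by
          intro p
          by_cases hp : p ∈ P
          · obtain ⟨y, hyF, hyn⟩ := Set.not_subset.1 (hsub p hp)
            have hyC := hF.1.1.1 hyF
            refine ⟨y, fun _ => ⟨hyF, lt_of_le_of_ne (hyC p hp) ?_⟩⟩
            intro h
            exact hyn ⟨hyC, h.symm⟩
          · exact ⟨0, fun h => absurd h hp⟩
        choose y hy using hy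
        have hcard : 0 < hP.toFinset.card := by
          rw [Finset.card_pos]; simpa using hne
        have hcard' : (0 : ℝ) < hP.toFinset.card := by exact_mod_cast hcard
        have hw : ∑ p ∈ hP.toFinset, (1 / (hP.toFinset.card : ℝ)) • y p ∈ F := by
          apply hF.1.2.sum_mem
          · intro i _; positivity
          · rw [Finset.sum_const, nsmul_eq_mul]; field_simp
          · intro i hi; exact (hy i (by simpa using hi)).1
        apply hF.2.1
        refine face_eq_of_pos hP φ F hF.1.1 _ hw ?_
        intro q hq
        rw [map_sum]
        apply Finset.sum_pos'
        · intro i hi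
          have hiP : i ∈ P := by simpa using hi
          have := hF.1.1.1 (hy i hiP).1 q hq
          rw [map_smul, smul_eq_mul]
          positivity
        · refine ⟨q, by simpa using hq, ?_⟩
          have := (hy q hq).2
          rw [map_smul, smul_eq_mul]
          positivity
    · rintro ⟨p, hp, rfl⟩
      exact hfacet p hp
  rw [numFacets, himg]
  apply Set.InjOn.ncard_image
  intro p hp q hq h
  by_contra hpq
  have h1 : z p ∈ Fc q := h ▸ hzF p hp
  have h2 := hzpos p hp q hq (Ne.symm hpq)
  rw [h1.2] at h2
  exact lt_irrefl _ h2

end Poly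

/-! ### Combinatorial part -/

theorem wireX_ne_wireY (w : List ℕ) (j : ℕ) : wireX w j ≠ wireY w j := by
  unfold wireX wireY
  intro h
  have := (stateAbove w j).injective h
  omega

theorem otherWire_ne {w : List ℕ} {j r : ℕ} : otherWire w j r ≠ r := by
  unfold otherWire
  have := wireX_ne_wireY w j
  split_ifs with h
  · rw [← h]; exact this.symm
  · exact h

/-- the smaller of the wires at a node -/
def loW (w : List ℕ) (j : ℕ) : ℕ := min (wireX w j) (wireY w j)

/-- the larger of the wires at a node -/
def hiW (w : List ℕ) (j : ℕ) : ℕ := max (wireX w j) (wireY w j)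

/-- path sum of a node-dependent potential -/
def pathSum (w : List ℕ) (h : ℕ → ℕ → ℝ) : ℕ → List ℕ → ℝ
  | _, [] => 0
  | r, m :: ms => h m r - h m (otherWire w m r) + pathSum w h (otherWire w m r) ms

/-- the switches are at valid nodes on the successive wires -/
def Chain (w : List ℕ) : ℕ → List ℕ → Prop
  | _, [] => True
  | r, m :: ms => ValidNode w m ∧ NodeOnWire w m r ∧ Chain w (otherWire w m r) ms

theorem chain_of_travel {w : List ℕ} {k : ℕ} : ∀ {ms : List ℕ} {r a : ℕ},
    TravelOK w k r a ms → Chain w r ms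
  | [], _, _, _ => trivial
  | _ :: _, _, _, h => ⟨h.1, h.2.1, chain_of_travel h.2.2.2.2⟩

theorem chain_valid {w : List ℕ} : ∀ {ms : List ℕ} {r : ℕ},
    Chain w r ms → ∀ m ∈ ms, ValidNode w m
  | [], _, _ => by simp
  | m :: ms, r, h => by
      intro x hx
      rcases List.mem_cons.1 hx with rfl | hx
      · exact h.1
      · exact chain_valid h.2.2 x hx

theorem sum_coeff {w : List ℕ} {n : ℕ} (hlen : w.length = Dim n) (h : ℕ → ℕ → ℝ) :
    ∀ {ms : List ℕ} {r : ℕ}, Chain w r ms →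
    ∑ j : Fin (Dim n), coeff w r ms ((j : ℕ) + 1) *
      (h ((j : ℕ) + 1) (loW w ((j : ℕ) + 1)) - h ((j : ℕ) + 1) (hiW w ((j : ℕ) + 1)))
      = pathSum w h r ms
  | [], r, _ => by simp [coeff, pathSwitches, pathSum]
  | m :: ms, r, hc => by
      have ih := sum_coeff hlen h hc.2.2
      have hval := hc.1
      have hon := hc.2.1
      have hstep : ∀ j, coeff w r (m :: ms) j =
          (if m = j then (if r < otherWire w m r then (1 : ℝ) else -1) else 0) +
            coeff w (otherWire w m r) ms j := by
        intro j; simp [coeff, pathSwitches]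
      simp only [hstep, add_mul, Finset.sum_add_distrib, ih, pathSum]
      congr 1
      unfold ValidNode at hval
      have hm : m - 1 < Dim n := by omega
      rw [Finset.sum_eq_single (⟨m - 1, hm⟩ : Fin (Dim n))]
      · have e : m - 1 + 1 = m := by omega
        simp only [e, if_true]
        have hne := wireX_ne_wireY w m
        unfold NodeOnWire at hon
        unfold otherWire loW hiW
        by_cases hx : wireX w m = r
        · simp only [hx, if_true]
          rw [hx] at hne
          split_ifs with hlt
          · rw [min_eq_left hlt.le, max_eq_right hlt.le]; ring
          · rw [min_eq_right (by omega), max_eq_left (by omega)]; ring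
        · have hy : wireY w m = r := hon.resolve_left hx
          simp only [hx, if_false]
          simp only [hy]
          split_ifs with hlt
          · rw [min_eq_right hlt.le, max_eq_left hlt.le]; ring
          · rw [min_eq_left (by omega), max_eq_right (by omega)]; ring
      · intro j _ hj
        have : m ≠ (j : ℕ) + 1 := by
          intro hh; apply hj; ext; simp; omega
        simp [this]
      · simp

theorem coeff_eq_zero {w : List ℕ} {j : ℕ} : ∀ {ms : List ℕ} {r : ℕ},
    j ∉ ms → coeff w r ms j = 0
  | [], _, _ => by simp [coeff, pathSwitches]
  | m :: ms, r, h => by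
      have ih := coeff_eq_zero (w := w) (r := otherWire w m r)
        (fun hh => h (List.mem_cons_of_mem m hh))
      have : m ≠ j := fun hh => h (by simp [hh])
      simpa [coeff, pathSwitches, this] using ih

theorem coeff_ne_zero {w : List ℕ} {j : ℕ} : ∀ {ms : List ℕ} {r : ℕ},
    ms.Nodup → j ∈ ms → coeff w r ms j ≠ 0
  | [], _, _, h => by simp at h
  | m :: ms, r, hn, h => by
      rw [List.nodup_cons] at hn
      have hstep : coeff w r (m :: ms) j =
          (if m = j then (if r < otherWire w m r then (1 : ℝ) else -1) else 0) +
            coeff w (otherWire w m r) ms j := by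
        simp [coeff, pathSwitches]
      rw [hstep]
      by_cases hm : m = j
      · subst hm
        rw [coeff_eq_zero hn.1, if_pos rfl]
        split_ifs <;> norm_num
      · have hj : j ∈ ms := by
          rcases List.mem_cons.1 h with h | h
          · exact absurd h.symm hm
          · exact h
        simpa [hm] using coeff_ne_zero (r := otherWire w m r) hn.2 hj

theorem mem_nodesOn {w : List ℕ} {r j : ℕ} :
    j ∈ nodesOn w r ↔ ValidNode w j ∧ NodeOnWire w j r := by
  unfold nodesOn ValidNode
  simp only [List.mem_filter, List.mem_map, List.mem_range, decide_eq_true_eq]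
  constructor
  · rintro ⟨⟨a, ha, rfl⟩, h⟩; exact ⟨⟨by omega, by omega⟩, h⟩
  · rintro ⟨h1, h⟩; exact ⟨⟨j - 1, by omega, by omega⟩, h⟩

theorem mem_segList {w : List ℕ} {r a b j : ℕ} :
    j ∈ segList w r a b ↔ (ValidNode w j ∧ NodeOnWire w j r) ∧ min a b < j ∧ j < max a b := by
  unfold segList
  rw [List.mem_filter, mem_nodesOn, decide_eq_true_eq]

theorem mem_tailList {w : List ℕ} {r a j : ℕ} :
    j ∈ tailList w r a ↔ (ValidNode w j ∧ NodeOnWire w j r) ∧ a < j := by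
  unfold tailList
  rw [List.mem_filter, mem_nodesOn, decide_eq_true_eq]

theorem sublist_visitTail {w : List ℕ} : ∀ {ms : List ℕ} {r a : ℕ},
    ms.Sublist (visitTail w r a ms)
  | [], _, _ => List.nil_sublist _
  | m :: ms, r, a => by
      have := sublist_visitTail (w := w) (ms := ms) (r := otherWire w m r) (a := m)
      exact (this.cons_cons m).trans (List.sublist_append_right _ _)

theorem sublist_visitList {w : List ℕ} {k : ℕ} : ∀ {ms : List ℕ},
    ms.Sublist (visitList w k ms)
  | [] => List.nil_sublist _
  | m :: ms => by
      have := sublist_visitTail (w := w) (ms := ms) (r := otherWire w m k) (a := m)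
      exact (this.cons_cons m).trans (List.sublist_append_right _ _)

theorem travel_unique {w : List ℕ} {k : ℕ} : ∀ {ms ms' : List ℕ} {r a : ℕ},
    TravelOK w k r a ms → TravelOK w k r a ms' →
    (visitTail w r a ms).Nodup → (visitTail w r a ms').Nodup →
    (∀ j, j ∈ ms ↔ j ∈ ms') → ms = ms'
  | [], [], _, _, _, _, _, _, _ => rfl
  | [], m' :: _, _, _, _, _, _, _, h => by simpa using (h m').2 (by simp)
  | m :: _, [], _, _, _, _, _, _, h => by simpa using (h m).1 (by simp)
  | m :: ms, m' :: ms', r, a, ht, ht', hn, hn', h => by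
      have key : ∀ {m₁ m₂ : ℕ} {l₁ l₂ : List ℕ}, TravelOK w k r a (m₁ :: l₁) →
          TravelOK w k r a (m₂ :: l₂) → (visitTail w r a (m₂ :: l₂)).Nodup →
          m₁ ∈ m₂ :: l₂ → ¬ (min a m₂ < m₁ ∧ m₁ < max a m₂) := by
        intro m₁ m₂ l₁ l₂ h1 h2 hnd hmem hlt
        have hseg : m₁ ∈ segList w r a m₂ := mem_segList.2 ⟨⟨h1.1, h1.2.1⟩, hlt⟩
        simp only [visitTail] at hnd
        have hd := (List.nodup_append.1 hnd).2.2
        have h3 : m₁ ∈ m₂ :: visitTail w (otherWire w m₂ r) m₂ l₂ :=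
          (sublist_visitTail.cons_cons m₂).subset hmem
        exact hd m₁ hseg m₁ h3 rfl
      have hmm : m = m' := by
        have k1 := key ht ht' hn' ((h m).1 (by simp))
        have k2 := key ht' ht hn ((h m').2 (by simp))
        have d1 := ht.2.2.1
        have d2 := ht'.2.2.1
        split_ifs at d1 d2 <;> omega
      subst hmm
      have hnd1 : (m :: visitTail w (otherWire w m r) m ms).Nodup :=
        (List.nodup_append.1 hn).2.1
      have hnd2 : (m :: visitTail w (otherWire w m r) m ms').Nodup :=
        (List.nodup_append.1 hn').2.1
      rw [List.nodup_cons] at hnd1 hnd2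
      have hm1 : m ∉ ms := fun hh => hnd1.1 (sublist_visitTail.subset hh)
      have hm2 : m ∉ ms' := fun hh => hnd2.1 (sublist_visitTail.subset hh)
      congr 1
      refine travel_unique ht.2.2.2.2 ht'.2.2.2.2 hnd1.2 hnd2.2 ?_
      intro j
      have hj := h j
      simp only [List.mem_cons] at hj
      by_cases hjm : j = m
      · subst hjm; simp [hm1, hm2]
      · simpa [hjm] using hj

theorem path_unique {n : ℕ} {w : List ℕ} {k : ℕ} {ms ms' : List ℕ}
    (hp : IsGPPath n w k ms) (hp' : IsGPPath n w k ms') (h : ∀ j, j ∈ ms ↔ j ∈ ms') :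
    ms = ms' := by
  obtain ⟨_, _, h1, hn⟩ := hp
  obtain ⟨_, _, h1', hn'⟩ := hp'
  match ms, ms', h1, h1' with
  | m :: ms, m' :: ms', h1, h1' =>
    simp only [visitList] at hn hn'
    have a1 := List.nodup_append.1 hn
    have a2 := List.nodup_append.1 hn'
    have hmm : m = m' := by
      by_contra hne
      rcases lt_or_gt_of_ne hne with hlt | hlt
      · have : m' ∈ tailList w k m := mem_tailList.2 ⟨⟨h1'.1, h1'.2.1⟩, hlt⟩
        refine a1.2.2 m' this m' ?_ rfl
        exact (sublist_visitTail.cons_cons m).subset ((h m').2 (by simp))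
      · have : m ∈ tailList w k m' := mem_tailList.2 ⟨⟨h1.1, h1.2.1⟩, hlt⟩
        refine a2.2.2 m this m ?_ rfl
        exact (sublist_visitTail.cons_cons m').subset ((h m).1 (by simp))
    subst hmm
    have b1 := List.nodup_cons.1 a1.2.1
    have b2 := List.nodup_cons.1 a2.2.1
    have hm1 : m ∉ ms := fun hh => b1.1 (sublist_visitTail.subset hh)
    have hm2 : m ∉ ms' := fun hh => b2.1 (sublist_visitTail.subset hh)
    congr 1
    refine travel_unique h1.2.2.2 h1'.2.2.2 b1.2 b2.2 ?_
    intro j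
    have hj := h j
    simp only [List.mem_cons] at hj
    by_cases hjm : j = m
    · subst hjm; simp [hm1, hm2]
    · simpa [hjm] using hj

theorem chain_of_path {n : ℕ} {w : List ℕ} {k : ℕ} {ms : List ℕ}
    (hp : IsGPPath n w k ms) : Chain w k ms := by
  obtain ⟨_, _, h1, _⟩ := hp
  match ms, h1 with
  | m :: ms, h1 => exact ⟨h1.1, h1.2.1, chain_of_travel h1.2.2.2⟩

theorem pathSum_const_travel {w : List ℕ} {k : ℕ} (f : ℕ → ℝ) : ∀ {ms : List ℕ} {r a : ℕ},
    TravelOK w k r a ms → pathSum w (fun _ => f) r ms = f r - f (k + 1)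
  | [], r, _, h => by simp [pathSum, h.1]
  | m :: ms, r, a, h => by
      rw [pathSum, pathSum_const_travel f h.2.2.2.2]; ring

theorem pathSum_const {n : ℕ} {w : List ℕ} {k : ℕ} (f : ℕ → ℝ) {ms : List ℕ}
    (hp : IsGPPath n w k ms) : pathSum w (fun _ => f) k ms = f k - f (k + 1) := by
  obtain ⟨_, _, h1, _⟩ := hp
  match ms, h1 with
  | m :: ms, h1 => rw [pathSum, pathSum_const_travel f h1.2.2.2]; ring

/-- potential measuring the flow on the edge of wire `ρ` just below node `v` -/
def edgePot (ρ v : ℕ) : ℕ → ℕ → ℝ := fun m r => if m ≤ v ∧ r = ρ then 1 else 0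

/-- number of times the travel covers the edge of wire `ρ` just below node `v` -/
def cov (w : List ℕ) (ρ v : ℕ) : ℕ → ℕ → List ℕ → ℕ
  | r, a, [] => if a ≤ v ∧ r = ρ then 1 else 0
  | r, a, m :: ms =>
      (if (min a m ≤ v ∧ v < max a m) ∧ r = ρ then 1 else 0) + cov w ρ v (otherWire w m r) m ms

theorem pathSum_edge_travel {w : List ℕ} {k ρ v : ℕ} : ∀ {ms : List ℕ} {r a : ℕ},
    TravelOK w k r a ms → pathSum w (edgePot ρ v) r ms - edgePot ρ v a r =
      (if ρ ≤ k then 1 else -1) * (cov w ρ v r a ms : ℝ)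
  | [], r, a, h => by
      have h1 := h.1
      simp only [pathSum, edgePot, cov]
      by_cases hr : r = ρ
      · have : ¬ ρ ≤ k := by omega
        simp only [hr, this, and_true, if_false]
        split_ifs <;> simp
      · simp [hr]
  | m :: ms, r, a, h => by
      have ih := pathSum_edge_travel (ρ := ρ) (v := v) h.2.2.2.2
      have hd := h.2.2.1
      simp only [pathSum, cov]
      push_cast
      rw [mul_add, ← ih]
      by_cases hr : r = ρ
      · subst hr
        simp only [edgePot, and_true]
        by_cases hk : r ≤ k
        · simp only [hk, if_true] at hd ⊢
          rw [min_eq_right hd.le, max_eq_left hd.le]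
          by_cases h1 : m ≤ v <;> by_cases h2 : a ≤ v
          · have : ¬ v < a := by omega
            simp [h1, h2, this]; ring
          · have : v < a := by omega
            simp [h1, h2, this]
            ring
          · omega
          · simp [h1, h2]
        · simp only [hk, if_false] at hd ⊢
          rw [min_eq_left hd.le, max_eq_right hd.le]
          by_cases h1 : m ≤ v <;> by_cases h2 : a ≤ v
          · have : ¬ v < m := by omega
            simp [h1, h2, this]; ring
          · omega
          · have : v < m := by omega
            simp [h1, h2, this]
            ring
          · simp [h1, h2]
      · simp [edgePot, hr]; ring

theorem count_pos_le {l : List ℕ} {v : ℕ} (h : v ∈ l) : 1 ≤ l.count v :=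
  List.count_pos_iff.2 h

theorem cov_le_up {w : List ℕ} {k ρ v : ℕ} (hv : ValidNode w v) (hon : NodeOnWire w v ρ)
    (hρ : ρ ≤ k) : ∀ {ms : List ℕ} {r a : ℕ},
    TravelOK w k r a ms → cov w ρ v r a ms ≤ (visitTail w r a ms).count v
  | [], r, a, h => by
      have h1 := h.1
      have : r ≠ ρ := by omega
      simp [cov, this]
  | m :: ms, r, a, h => by
      have ih := cov_le_up hv hon hρ h.2.2.2.2
      have hd := h.2.2.1
      simp only [cov, visitTail, List.count_append, List.count_cons]
      split_ifs with hc hmv hmv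
      · omega
      · obtain ⟨⟨h1, h2⟩, rfl⟩ := hc
        simp only [hρ, if_true] at hd
        have hmv' : m ≠ v := by simpa using hmv
        have : v ∈ segList w r a m := mem_segList.2 ⟨⟨hv, hon⟩, by omega, h2⟩
        have := count_pos_le this
        omega
      · omega
      · omega

theorem cov_le_down {w : List ℕ} {k ρ v : ℕ} (hv : ValidNode w v) (hon : NodeOnWire w v ρ)
    (hρ : ¬ ρ ≤ k) : ∀ {ms : List ℕ} {r a : ℕ},
    TravelOK w k r a ms → cov w ρ v r a ms ≤ (a :: visitTail w r a ms).count v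
  | [], r, a, h => by
      simp only [cov, visitTail, List.count_cons]
      split_ifs with hc hmv hmv
      · omega
      · obtain ⟨h1, rfl⟩ := hc
        have hmv' : a ≠ v := by simpa using hmv
        have : v ∈ tailList w r a := mem_tailList.2 ⟨⟨hv, hon⟩, by omega⟩
        have := count_pos_le this
        omega
      · omega
      · omega
  | m :: ms, r, a, h => by
      have ih := cov_le_down hv hon hρ h.2.2.2.2
      have hd := h.2.2.1
      simp only [cov, visitTail]
      rw [List.count_cons, List.count_append]
      split_ifs with hc hmv hmv
      · omega
      · obtain ⟨⟨h1, h2⟩, rfl⟩ := hc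
        simp only [hρ, if_false] at hd
        have hmv' : a ≠ v := by simpa using hmv
        have : v ∈ segList w r a m := mem_segList.2 ⟨⟨hv, hon⟩, by omega, h2⟩
        have := count_pos_le this
        omega
      · omega
      · omega

theorem pathSum_edge {n : ℕ} {w : List ℕ} {k ρ v : ℕ} {ms : List ℕ}
    (hp : IsGPPath n w k ms) (hv : ValidNode w v) (hon : NodeOnWire w v ρ) :
    ∃ c : ℕ, c ≤ 1 ∧ pathSum w (edgePot ρ v) k ms = (if ρ ≤ k then 1 else -1) * (c : ℝ) := by
  obtain ⟨_, _, h1, hn⟩ := hp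
  match ms, h1 with
  | m :: ms, h1 =>
    have hc := List.nodup_iff_count_le_one.1 hn v
    simp only [visitList, List.count_append] at hc
    have hs := pathSum_edge_travel (ρ := ρ) (v := v) h1.2.2.2
    refine ⟨(if m ≤ v ∧ k = ρ then 1 else 0) + cov w ρ v (otherWire w m k) m ms, ?_, ?_⟩
    · by_cases hρ : ρ ≤ k
      · have hb := cov_le_up hv hon hρ h1.2.2.2
        rw [List.count_cons] at hc
        by_cases h3 : m ≤ v ∧ k = ρ
        · rw [if_pos h3]
          obtain ⟨h4, rfl⟩ := h3
          by_cases h2 : m = v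
          · simp only [h2, beq_self_eq_true, if_true] at hc hb ⊢
            omega
          · have := count_pos_le (mem_tailList.2 ⟨⟨hv, hon⟩, (by omega : m < v)⟩)
            omega
        · rw [if_neg h3]
          omega
      · have hb := cov_le_down hv hon hρ h1.2.2.2
        have : k ≠ ρ := by omega
        simp only [this, and_false, if_false]
        omega
    · rw [pathSum]
      push_cast
      rw [mul_add, ← hs]
      by_cases hk : k = ρ
      · subst hk
        simp [edgePot]; ring
      · simp [edgePot, hk]; ring

/-! ### The witness functional -/

/-- the string inequality as a linear map -/
def strLin (n : ℕ) (w : List ℕ) (p : ℕ × List ℕ) : (Fin (Dim n) → ℝ) →ₗ[ℝ] ℝ where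
  toFun := stringIneq n w p
  map_add' x y := by
    simp only [stringIneq, Pi.add_apply, mul_add, Finset.sum_add_distrib]
  map_smul' c x := by
    simp only [stringIneq, Pi.smul_apply, smul_eq_mul, RingHom.id_apply, Finset.mul_sum]
    exact Finset.sum_congr rfl fun j _ => by ring

theorem strLin_apply (n : ℕ) (w : List ℕ) (p : ℕ × List ℕ) (t : Fin (Dim n) → ℝ) :
    strLin n w p t = stringIneq n w p t := rfl

/-- the point of `ℝ^N` attached to a node-dependent potential -/
def tOf (n : ℕ) (w : List ℕ) (h : ℕ → ℕ → ℝ) : Fin (Dim n) → ℝ := fun j =>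
  h ((j : ℕ) + 1) (loW w ((j : ℕ) + 1)) - h ((j : ℕ) + 1) (hiW w ((j : ℕ) + 1))

theorem strLin_tOf {n : ℕ} {w : List ℕ} (hlen : w.length = Dim n) (h : ℕ → ℕ → ℝ)
    {p : ℕ × List ℕ} (hp : p ∈ GP n w) : strLin n w p (tOf n w h) = pathSum w h p.1 p.2 :=
  sum_coeff hlen h (chain_of_path hp)

/-- the point whose functional is the flow below node `v + 1` on one of its wires -/
def edgePt (n : ℕ) (w : List ℕ) (v : Fin (Dim n)) : Fin (Dim n) → ℝ :=
  tOf n w (edgePot (wireX w ((v : ℕ) + 1)) ((v : ℕ) + 1))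

theorem edgePt_gt {n : ℕ} {w : List ℕ} {v j : Fin (Dim n)} (h : v < j) : edgePt n w v j = 0 := by
  have : ¬ (j : ℕ) ≤ (v : ℕ) := by simpa using h
  simp [edgePt, tOf, edgePot, this]

theorem edgePt_self {n : ℕ} {w : List ℕ} {v : Fin (Dim n)} : edgePt n w v v ≠ 0 := by
  have hne := wireX_ne_wireY w ((v : ℕ) + 1)
  simp only [edgePt, tOf, edgePot, loW, hiW, le_refl, true_and]
  rcases lt_or_gt_of_ne hne with h | h
  · rw [min_eq_left h.le, max_eq_right h.le]
    simp [hne.symm]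
  · rw [min_eq_right h.le, max_eq_left h.le]
    simp [hne.symm]

theorem edge_value {n : ℕ} {w : List ℕ} (hlen : w.length = Dim n) {p : ℕ × List ℕ}
    (hp : p ∈ GP n w) (v : Fin (Dim n)) :
    ∃ c : ℕ, c ≤ 1 ∧ strLin n w p (edgePt n w v) =
      (if wireX w ((v : ℕ) + 1) ≤ p.1 then 1 else -1) * (c : ℝ) := by
  rw [edgePt, strLin_tOf hlen _ hp]
  exact pathSum_edge hp ⟨by omega, by have := v.2; omega⟩ (Or.inl rfl)

theorem path_nodup {n : ℕ} {w : List ℕ} {k : ℕ} {ms : List ℕ} (hp : IsGPPath n w k ms) :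
    ms.Nodup := hp.2.2.2.sublist sublist_visitList

theorem eq_of_edge {n : ℕ} {w : List ℕ} (hlen : w.length = Dim n) {k : ℕ} {ms ms' : List ℕ}
    (hp : IsGPPath n w k ms) (hp' : IsGPPath n w k ms')
    (h : ∀ v, strLin n w (k, ms) (edgePt n w v) = strLin n w (k, ms') (edgePt n w v)) :
    ms = ms' := by
  have hc : ∀ N : ℕ, ∀ v : Fin (Dim n), (v : ℕ) = N →
      coeff w k ms ((v : ℕ) + 1) = coeff w k ms' ((v : ℕ) + 1) := by
    intro N
    induction N using Nat.strong_induction_on with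
    | _ N ih =>
      intro v hv
      have h1 := h v
      simp only [strLin_apply, stringIneq, normalVec] at h1
      rw [← sub_eq_zero, ← Finset.sum_sub_distrib, Finset.sum_eq_single v] at h1
      · rw [← sub_mul] at h1
        rcases mul_eq_zero.1 h1 with h2 | h2
        · linarith
        · exact absurd h2 edgePt_self
      · intro j _ hj
        rcases lt_or_gt_of_ne hj with hlt | hlt
        · rw [ih (j : ℕ) (by rw [← hv]; exact hlt) j rfl]; ring
        · rw [edgePt_gt hlt]; ring
      · simp
  apply path_unique hp hp'
  have key : ∀ {l l' : List ℕ}, IsGPPath n w k l → IsGPPath n w k l' →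
      (∀ v : Fin (Dim n), coeff w k l ((v : ℕ) + 1) = coeff w k l' ((v : ℕ) + 1)) →
      ∀ j ∈ l, j ∈ l' := by
    intro l l' hl hl' he j hj
    by_contra hj'
    have hval := chain_valid (chain_of_path hl) j hj
    unfold ValidNode at hval
    have h1 := he ⟨j - 1, by omega⟩
    have e : j - 1 + 1 = j := by omega
    simp only [e] at h1
    rw [coeff_eq_zero hj'] at h1
    exact coeff_ne_zero (path_nodup hl) hj h1
  intro j
  exact ⟨key hp hp' (fun v => hc _ v rfl) j, key hp' hp (fun v => (hc _ v rfl).symm) j⟩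

theorem tZero_value {n : ℕ} {w : List ℕ} (hlen : w.length = Dim n) {p : ℕ × List ℕ}
    (hp : p ∈ GP n w) : strLin n w p (tOf n w (fun _ r => -(r : ℝ))) = 1 := by
  rw [strLin_tOf hlen _ hp, pathSum_const (fun r => -(r : ℝ)) hp]
  push_cast; ring

theorem tInd_value {n : ℕ} {w : List ℕ} (hlen : w.length = Dim n) {p : ℕ × List ℕ}
    (hp : p ∈ GP n w) (k : ℕ) :
    strLin n w p (tOf n w (fun _ r => if r ≤ k then 1 else 0)) = if p.1 = k then 1 else 0 := by
  rw [strLin_tOf hlen _ hp, pathSum_const (fun r => if r ≤ k then 1 else 0) hp]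
  rcases lt_trichotomy p.1 k with h | h | h
  · rw [if_pos (by omega), if_pos (by omega), if_neg (by omega)]; ring
  · rw [if_pos (by omega), if_neg (by omega), if_pos (by omega)]; ring
  · rw [if_neg (by omega), if_neg (by omega), if_neg (by omega)]; ring

theorem exists_witness {n : ℕ} {w : List ℕ} (hlen : w.length = Dim n) {p₀ : ℕ × List ℕ}
    (hp₀ : p₀ ∈ GP n w) :
    ∃ t, strLin n w p₀ t < 0 ∧ ∀ p ∈ GP n w, p ≠ p₀ → 0 ≤ strLin n w p t := by
  obtain ⟨k, ms₀⟩ := p₀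
  choose c hc hcv using fun v => edge_value hlen hp₀ v
  set s : Fin (Dim n) → ℝ := fun v => if wireX w ((v : ℕ) + 1) ≤ k then 1 else -1 with hs
  have hss : ∀ v, s v * s v = 1 := by intro v; simp only [hs]; split_ifs <;> norm_num
  have hsabs : ∀ v, |s v| = 1 := by intro v; simp only [hs]; split_ifs <;> simp
  have hcabs : ∀ v, |1 - 2 * (c v : ℝ)| = 1 := by
    intro v
    have := hc v
    interval_cases c v <;> norm_num
  set D : Fin (Dim n) → ℝ := ∑ v, ((1 - 2 * (c v : ℝ)) * s v) • edgePt n w v with hD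
  have hDp : ∀ p, strLin n w p D = ∑ v, ((1 - 2 * (c v : ℝ)) * s v) *
      strLin n w p (edgePt n w v) := by
    intro p; simp [hD, map_sum]
  set B : Fin (Dim n) → ℝ := tOf n w (fun _ r => if r ≤ k then 1 else 0) with hB
  set T : Fin (Dim n) → ℝ := tOf n w (fun _ r => -(r : ℝ)) with hT
  refine ⟨D + (-(strLin n w (k, ms₀) D) - 1) • B + (Dim n : ℝ) • (T - B), ?_, ?_⟩
  · simp only [map_add, map_smul, map_sub, smul_eq_mul, hB, hT, tInd_value hlen hp₀,
      tZero_value hlen hp₀]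
    simp only [if_true]
    linarith
  · rintro ⟨k', ms⟩ hp hne
    simp only [map_add, map_smul, map_sub, smul_eq_mul]
    rw [hB, hT, tInd_value hlen hp, tZero_value hlen hp]
    choose c' hc' hcv' using fun v => edge_value hlen hp v
    by_cases hk : k' = k
    · subst hk
      have hms : ms ≠ ms₀ := fun hh => hne (by rw [hh])
      simp only [if_true]
      have hdiff : strLin n w (k', ms) D - strLin n w (k', ms₀) D =
          ∑ v, (1 - 2 * (c v : ℝ)) * ((c' v : ℝ) - c v) := by
        rw [hDp, hDp, ← Finset.sum_sub_distrib]
        refine Finset.sum_congr rfl fun v _ => ?_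
        rw [hcv, hcv']
        change (1 - 2 * (c v : ℝ)) * s v * (s v * c' v) - (1 - 2 * (c v : ℝ)) * s v * (s v * c v) = _
        linear_combination ((1 - 2 * (c v : ℝ)) * (c' v - c v)) * hss v
      have hterm : ∀ v, (1 - 2 * (c v : ℝ)) * ((c' v : ℝ) - c v) =
          if c' v = c v then 0 else 1 := by
        intro v
        have h1 := hc v
        have h2 := hc' v
        interval_cases c v <;> interval_cases c' v <;> norm_num
      obtain ⟨v, hv⟩ : ∃ v, c' v ≠ c v := by
        by_contra hall
        push Not at hall
        apply hms
        apply eq_of_edge hlen hp hp₀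
        intro v
        rw [hcv, hcv', hall]
      have hge : 1 ≤ ∑ v, (1 - 2 * (c v : ℝ)) * ((c' v : ℝ) - c v) := by
        have h1 : (1 - 2 * (c v : ℝ)) * ((c' v : ℝ) - c v) = 1 := by
          rw [hterm, if_neg hv]
        refine h1.ge.trans ?_
        refine Finset.single_le_sum (f := fun v => (1 - 2 * (c v : ℝ)) * ((c' v : ℝ) - c v))
          (fun u _ => ?_) (Finset.mem_univ v)
        rw [hterm]; split_ifs <;> norm_num
      linarith
    · simp only [hk, if_false]
      have habs : |strLin n w (k', ms) D| ≤ Dim n := by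
        rw [hDp]
        refine (Finset.abs_sum_le_sum_abs _ _).trans ?_
        have : ∀ v ∈ (Finset.univ : Finset (Fin (Dim n))), |(1 - 2 * (c v : ℝ)) * s v *
            strLin n w (k', ms) (edgePt n w v)| ≤ 1 := by
          intro v _
          rw [abs_mul, abs_mul, hcabs, hsabs, hcv', abs_mul]
          have h2 : (c' v : ℝ) ≤ 1 := by exact_mod_cast hc' v
          have h3 : |(if wireX w ((v : ℕ) + 1) ≤ (k', ms).1 then (1 : ℝ) else -1)| = 1 := by
            split_ifs <;> simp
          rw [h3]
          simpa using h2
        refine (Finset.sum_le_sum this).trans ?_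
        simp
      have := (abs_le.1 habs).1
      linarith

/-! ### Finiteness and non-emptiness of `GP` -/

theorem GP_finite (n : ℕ) (w : List ℕ) : (GP n w).Finite := by
  have hfin : (Set.range (fun l : {l : List (Fin (w.length + 1)) // l.Nodup} =>
      List.map Fin.val l.1)).Finite := Set.finite_range _
  refine ((Set.finite_Iic n).prod hfin).subset ?_
  rintro ⟨k, ms⟩ hp
  refine ⟨hp.2.1, ?_⟩
  have hval := chain_valid (chain_of_path hp)
  have hnd : ms.Nodup := path_nodup hp
  have hlt : ∀ m ∈ ms, m < w.length + 1 := fun m hm => by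
    have := (hval m hm).2; omega
  refine ⟨⟨ms.pmap (fun m hm => (⟨m, hm⟩ : Fin (w.length + 1))) hlt, ?_⟩, ?_⟩
  · exact hnd.pmap (fun a _ b _ h => by simpa using h)
  · simp [List.map_pmap]

theorem exists_crossing {n : ℕ} (hn : 1 ≤ n) {w : List ℕ} (hw : IsReduced n w) :
    ∃ j, ValidNode w j ∧ NodeOnWire w j n ∧ NodeOnWire w j (n + 1) := by
  by_contra hno
  have hinv : ∀ t, t ≤ w.length →
      (wordProd (w.take t)).symm n < (wordProd (w.take t)).symm (n + 1) := by
    intro t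
    induction t with
    | zero => intro _; simp only [List.take_zero, wordProd, List.map_nil, List.prod_nil]; exact Nat.lt_succ_self n
    | succ t ih =>
      intro ht
      have ih' := ih (by omega)
      have htl : t < w.length := by omega
      set P := wordProd (w.take t) with hP
      set a := w[t] with ha
      have hprod : wordProd (w.take (t + 1)) = P * sTrans a := by
        rw [List.take_add_one, List.getElem?_eq_getElem htl]
        simp only [wordProd, hP, ha, Option.toList_some, List.map_append, List.prod_append,
          List.map_cons, List.map_nil, List.prod_cons, List.prod_nil, mul_one]
      have hX : wireX w (t + 1) = P a := by
        simp [wireX, stateAbove, letterAt, hP, ha, htl]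
      have hY : wireY w (t + 1) = P (a + 1) := by
        simp [wireY, stateAbove, letterAt, hP, ha, htl]
      have hx : P (P.symm n) = n := P.apply_symm_apply n
      have hy : P (P.symm (n + 1)) = n + 1 := P.apply_symm_apply (n + 1)
      have hnot : ¬ (P.symm n = a ∧ P.symm (n + 1) = a + 1) := by
        rintro ⟨h1, h2⟩
        apply hno
        refine ⟨t + 1, ⟨by omega, by omega⟩, Or.inl ?_, Or.inr ?_⟩
        · rw [hX, ← h1, hx]
        · rw [hY, ← h2, hy]
      have hsym : ∀ x, (wordProd (w.take (t + 1))).symm x = Equiv.swap a (a + 1) (P.symm x) := by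
        intro x
        rw [Equiv.symm_apply_eq, hprod]
        simp [sTrans]
      rw [hsym, hsym, Equiv.swap_apply_def, Equiv.swap_apply_def]
      split_ifs <;> omega
  have hend := hinv w.length le_rfl
  rw [List.take_length, hw.2.2] at hend
  have e1 : (longestPerm n).symm n = 2 := by
    rw [Equiv.symm_apply_eq]
    change n = if 1 ≤ 2 ∧ 2 ≤ n + 1 then n + 2 - 2 else 2
    split_ifs <;> omega
  have e2 : (longestPerm n).symm (n + 1) = 1 := by
    rw [Equiv.symm_apply_eq]
    change n + 1 = if 1 ≤ 1 ∧ 1 ≤ n + 1 then n + 2 - 1 else 1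
    split_ifs <;> omega
  rw [e1, e2] at hend
  omega

theorem nodesOn_nodup (w : List ℕ) (r : ℕ) : (nodesOn w r).Nodup := by
  unfold nodesOn
  apply List.Nodup.filter
  exact List.Nodup.map (fun a b h => by simpa using h) List.nodup_range

theorem GP_nonempty {n : ℕ} (hn : 1 ≤ n) {w : List ℕ} (hw : IsReduced n w) :
    (GP n w).Nonempty := by
  obtain ⟨j, hj⟩ := exists_crossing hn hw
  set Q : ℕ → Prop := fun j => ValidNode w j ∧ NodeOnWire w j n ∧ NodeOnWire w j (n + 1) with hQ
  obtain ⟨m, hm, hmax⟩ : ∃ m, Q m ∧ ∀ j, m < j → ¬ Q j := by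
    refine ⟨Nat.findGreatest Q w.length, Nat.findGreatest_spec (P := Q) hj.1.2 hj, ?_⟩
    intro i hi hQi
    exact Nat.findGreatest_is_greatest hi hQi.1.2 hQi
  obtain ⟨hv, h1, h2⟩ := hm
  have ho : otherWire w m n = n + 1 := by
    unfold otherWire
    unfold NodeOnWire at h1 h2
    split_ifs with h
    · rcases h2 with h2 | h2
      · omega
      · exact h2
    · rcases h2 with h2 | h2
      · exact h2
      · omega
  refine ⟨(n, [m]), hn, le_rfl, ⟨hv, h1, ?_, ?_⟩, ?_⟩
  · intro i _ hf
    unfold Forbidden at hf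
    omega
  · refine ⟨ho, ?_⟩
    rw [ho]
    intro i _ hf
    unfold Forbidden at hf
    omega
  · simp only [visitList, visitTail, ho]
    rw [List.nodup_append]
    refine ⟨(nodesOn_nodup w n).filter _, ?_, ?_⟩
    · rw [List.nodup_cons]
      refine ⟨fun h => ?_, (nodesOn_nodup w (n + 1)).filter _⟩
      have := (mem_tailList.1 h).2
      omega
    · rintro x hx y hy rfl
      have hx' := mem_tailList.1 hx
      rcases List.mem_cons.1 hy with rfl | hy
      · omega
      · have hy' := mem_tailList.1 hy
        exact hmax x hx'.2 ⟨hx'.1.1, hx'.1.2, hy'.1.2⟩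

/-- non-redundancy of the string inequalities.
The system of string inequalities indexed by `GP(i)` is non-redundant for `C_i`:
removing any one of them changes the cone; equivalently the number of facets of
`C_i` equals `|GP(i)|`. -/
theorem statement5 (n : ℕ) (hn : 1 ≤ n) (i : List ℕ) (hi : IsReduced n i) :
    (∀ p ∈ GP n i, stringConeExcept n i p ≠ stringCone n i) ∧
    numFacets (stringCone n i) = numGP n i := by
  have hlen : i.length = Dim n := hi.1
  constructor
  · intro p hp heq
    obtain ⟨t, ht, ht'⟩ := exists_witness hlen hp
    have h1 : t ∈ stringConeExcept n i p := fun q hq hne => ht' q hq hne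
    rw [heq] at h1
    have h2 := h1 p hp
    rw [← strLin_apply] at h2
    linarith
  · have hwit : ∀ p : ℕ × List ℕ, ∃ t, p ∈ GP n i → strLin n i p t < 0 ∧
        ∀ q ∈ GP n i, q ≠ p → 0 ≤ strLin n i q t := by
      intro p
      by_cases hp : p ∈ GP n i
      · obtain ⟨t, ht⟩ := exists_witness hlen hp
        exact ⟨t, fun _ => ht⟩
      · exact ⟨0, fun h => absurd h hp⟩
    choose u hu using hwit
    exact facets_count (GP_finite n i) (GP_nonempty hn hi) (strLin n i) _
      (fun p hp => tZero_value hlen hp) u (fun p hp => (hu p hp).1) (fun p hp => (hu p hp).2)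

end StringPolytope
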